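/- A quantum state ρ on H^1 ⊗ ... ⊗ H^N is separable with respect to a partition P into k blocks if and only if Tr[ρ ξ] ≥ 0 for every operator ξ that is block-positive with respect to P. -/

import Mathlib

/-!
Every block state is a finite sum of rank-one operators `|v⟩⟨v|`, so by multilinearity a product of
block states is a finite sum of operators `|φ⟩⟨φ|` with `φ` a product vector
(`prodAcross_eq_sum`). Pairing such a sum with a block-positive operator gives a nonnegative number,
which is the forward implication.

For the converse, let `S` be the set of projections `|φ⟩⟨φ|` onto products `φ` of unit vectors.
It is a continuous image of a product of spheres, hence compact, and by Carathéodory's theorem its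
convex hull is compact as well (`isCompact_convexHull_of_isCompact`). If `ρ` is not separable, it
lies outside this hull, and Hahn-Banach provides an operator `G` and a real `u` with
`Re Tr[ρ G] < u < Re Tr[A G]` for all `A ∈ S`. Then `ξ = (G + Gᴴ) / 2 - u` is block-positive
(first on products of unit vectors, then on all product vectors by scaling), since all operators
involved are Hermitian of trace one, whereas `Tr[ρ ξ] < 0`.
-/

open Matrix BigOperators ComplexOrder

noncomputable section

/-- Index set of the full multipartite Hilbert space: party `i` has dimension `d i`. -/
abbrev fullIdx {N : ℕ} (d : Fin N → ℕ) := (i : Fin N) → Fin (d i)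

/-- Index set of the Hilbert space of block `t` of the partition given by the
coloring `c : Fin N → Fin k`. -/
abbrev blockIdx {N : ℕ} (d : Fin N → ℕ) {k : ℕ} (c : Fin N → Fin k) (t : Fin k) :=
  (i : {i : Fin N // c i = t}) → Fin (d i.1)

/-- Tensor product, across the partition encoded by the coloring `c`, of operators
`M t` on the blocks. -/
def prodAcross {N : ℕ} (d : Fin N → ℕ) {k : ℕ} (c : Fin N → Fin k)
    (M : (t : Fin k) → Matrix (blockIdx d c t) (blockIdx d c t) ℂ) :
    Matrix (fullIdx d) (fullIdx d) ℂ :=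
  fun x y => ∏ t, M t (fun i => x i.1) (fun i => y i.1)

/-- A density operator: positive semidefinite with unit trace. -/
def IsState {n : Type*} [Fintype n] (ρ : Matrix n n ℂ) : Prop :=
  ρ.PosSemidef ∧ ρ.trace = 1

/-- `ρ` is separable with respect to the partition encoded by `c`: it is a convex
combination of tensor products of states on the blocks. -/
def SepWrt {N : ℕ} (d : Fin N → ℕ) {k : ℕ} (c : Fin N → Fin k)
    (ρ : Matrix (fullIdx d) (fullIdx d) ℂ) : Prop :=
  ∃ (m : ℕ) (p : Fin m → ℝ)
    (F : Fin m → (t : Fin k) → Matrix (blockIdx d c t) (blockIdx d c t) ℂ),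
    (∀ j, 0 ≤ p j) ∧ (∑ j, p j = 1) ∧ (∀ j t, IsState (F j t)) ∧
    ρ = ∑ j, (p j : ℂ) • prodAcross d c (F j)

/-- `ρ` is `k`-separable: a convex combination of states each separable with respect
to some partition of the parties into exactly `k` blocks. -/
def KSep {N : ℕ} (d : Fin N → ℕ) (k : ℕ)
    (ρ : Matrix (fullIdx d) (fullIdx d) ℂ) : Prop :=
  ∃ (m : ℕ) (p : Fin m → ℝ) (c : Fin m → Fin N → Fin k)
    (σ : Fin m → Matrix (fullIdx d) (fullIdx d) ℂ),
    (∀ j, 0 ≤ p j) ∧ (∑ j, p j = 1) ∧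
    (∀ j, Function.Surjective (c j)) ∧ (∀ j, SepWrt d (c j) (σ j)) ∧
    ρ = ∑ j, (p j : ℂ) • σ j

/-- `R_ent[ρ] ≤ r`: `ρ` is a convex combination of partition-separable states where
every block of every partition used contains at most `r` parties. -/
def REntLe {N : ℕ} (d : Fin N → ℕ) (r : ℕ)
    (ρ : Matrix (fullIdx d) (fullIdx d) ℂ) : Prop :=
  ∃ (m : ℕ) (p : Fin m → ℝ) (c : Fin m → Fin N → Fin N)
    (σ : Fin m → Matrix (fullIdx d) (fullIdx d) ℂ),
    (∀ j, 0 ≤ p j) ∧ (∑ j, p j = 1) ∧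
    (∀ j t, (Finset.univ.filter (fun i => c j i = t)).card ≤ r) ∧
    (∀ j, SepWrt d (c j) (σ j)) ∧
    ρ = ∑ j, (p j : ℂ) • σ j


/-- Tensor product, across the partition encoded by `c`, of vectors on the blocks. -/
def prodVec {N : ℕ} (d : Fin N → ℕ) {k : ℕ} (c : Fin N → Fin k)
    (ψ : (t : Fin k) → blockIdx d c t → ℂ) : fullIdx d → ℂ :=
  fun x => ∏ t, ψ t (fun i => x i.1)

/-- `ξ` is block-positive with respect to the partition encoded by `c`:
it is Hermitian and `⟨ψ₁⊗...⊗ψ_k| ξ |ψ₁⊗...⊗ψ_k⟩ ≥ 0` for all vectors `ψ_t` on the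
blocks. -/
def BlockPos {N : ℕ} (d : Fin N → ℕ) {k : ℕ} (c : Fin N → Fin k)
    (ξ : Matrix (fullIdx d) (fullIdx d) ℂ) : Prop :=
  ξ.IsHermitian ∧
  ∀ ψ : (t : Fin k) → blockIdx d c t → ℂ,
    0 ≤ (∑ x, ∑ y,
      (starRingEnd ℂ) (prodVec d c ψ x) * ξ x y * prodVec d c ψ y).re

/-- In a finite-dimensional space the convex hull of a compact set is compact: by Carathéodory's
theorem it is the image of `stdSimplex × s ^ (dim + 1)` under `(w, z) ↦ ∑ i, w i • z i`. -/
lemma isCompact_convexHull_of_isCompact {E : Type*} [AddCommGroup E] [Module ℝ E]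
    [TopologicalSpace E] [IsTopologicalAddGroup E] [ContinuousSMul ℝ E] [FiniteDimensional ℝ E]
    {s : Set E} (hs : IsCompact s) : IsCompact (convexHull ℝ s) := by
  set D := Module.finrank ℝ E + 1 with hD
  have key : convexHull ℝ s = (fun q : (Fin D → ℝ) × (Fin D → E) => ∑ i, q.1 i • q.2 i) ''
      (stdSimplex ℝ (Fin D) ×ˢ Set.pi Set.univ fun _ => s) := by
    apply Set.Subset.antisymm
    · intro x hx
      obtain ⟨x₀, hx₀⟩ : s.Nonempty := convexHull_nonempty_iff.1 ⟨x, hx⟩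
      obtain ⟨ι, _, z, w, hz, hind, hw, hw1, rfl⟩ := eq_pos_convex_span_of_mem_convexHull hx
      have hcard : Fintype.card ι ≤ Fintype.card (Fin D) := by
        simpa [hD] using hind.card_le_finrank_succ.trans
          (Nat.succ_le_succ (Submodule.finrank_le _))
      obtain ⟨e⟩ := Function.Embedding.nonempty_of_card_le hcard
      -- Unused slots of `Fin D` get weight zero and the dummy point `x₀`.
      have hout : ∀ i ∉ Set.range e, Function.extend e w 0 i = 0 := fun i hi =>
        Function.extend_apply' _ _ _ hi
      refine ⟨(Function.extend e w 0, Function.extend e z fun _ => x₀), ⟨⟨fun i => ?_, ?_⟩,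
        fun i _ => ?_⟩, ?_⟩
      · by_cases hi : i ∈ Set.range e
        · obtain ⟨j, rfl⟩ := hi
          simpa [e.injective.extend_apply] using (hw j).le
        · exact (hout i hi).ge
      · rw [← hw1]
        exact (Fintype.sum_of_injective e e.injective _ _ hout
          fun j => (e.injective.extend_apply _ _ _).symm).symm
      · by_cases hi : i ∈ Set.range e
        · obtain ⟨j, rfl⟩ := hi
          simpa [e.injective.extend_apply] using hz ⟨j, rfl⟩
        · simpa [Function.extend_apply' _ _ _ hi] using hx₀
      · refine (Fintype.sum_of_injective e e.injective _ _ (fun i hi => ?_) fun j => ?_).symm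
        · simp [hout i hi]
        · simp [e.injective.extend_apply]
    · rintro _ ⟨⟨w, z⟩, ⟨⟨hw0, hw1⟩, hz⟩, rfl⟩
      exact mem_convexHull_of_exists_fintype w z hw0 hw1 (fun i => hz i trivial) rfl
  rw [key]
  refine ((isCompact_stdSimplex ℝ (Fin D)).prod (isCompact_univ_pi fun _ => hs)).image ?_
  fun_prop

lemma trace_vecMulVec_star_mul {n : Type*} [Fintype n] (φ : n → ℂ) (ξ : Matrix n n ℂ) :
    (vecMulVec φ (star φ) * ξ).trace = ∑ x, ∑ y, (starRingEnd ℂ) (φ x) * ξ x y * φ y := by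
  simp only [Matrix.trace, Matrix.diag_apply, Matrix.mul_apply, vecMulVec_apply, Pi.star_apply]
  rw [Finset.sum_comm]
  refine Finset.sum_congr rfl fun x _ => Finset.sum_congr rfl fun y _ => ?_
  simp only [starRingEnd_apply]
  ring

/-- A linear functional on matrices is of the form `A ↦ Tr[A G]`. -/
lemma exists_eq_trace_mul {n : Type*} [Fintype n] [DecidableEq n] (f : Matrix n n ℂ →ₗ[ℂ] ℂ) :
    ∃ G : Matrix n n ℂ, ∀ A, f A = (A * G).trace := by
  refine ⟨fun y x => f (Matrix.single x y 1), fun A => ?_⟩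
  conv_lhs => rw [matrix_eq_sum_single A]
  simp only [map_sum, Matrix.trace, Matrix.diag_apply]
  refine Finset.sum_congr rfl fun x _ => Finset.sum_congr rfl fun y _ => ?_
  rw [← smul_eq_mul, ← map_smul, Matrix.smul_single, smul_eq_mul, mul_one]

/-- Against a Hermitian operator of unit trace, `(G + Gᴴ) / 2 - u` has expectation
`Re Tr[A G] - u`. -/
lemma re_trace_mul_witness {n : Type*} [Fintype n] [DecidableEq n] {A : Matrix n n ℂ}
    (hA : A.IsHermitian) (hA1 : A.trace = 1) (G : Matrix n n ℂ) (u : ℝ) :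
    ((A * ((1 / 2 : ℂ) • (G + Gᴴ) - (u : ℂ) • 1)).trace).re = ((A * G).trace).re - u := by
  have h : (A * Gᴴ).trace = star (A * G).trace := by
    rw [← trace_conjTranspose, conjTranspose_mul, hA.eq, trace_mul_comm]
  have h2 : (1 / 2 : ℂ) = ((1 / 2 : ℝ) : ℂ) := by norm_num
  rw [mul_sub, trace_sub, mul_smul_comm, mul_smul_comm, trace_smul, trace_smul, mul_add,
    trace_add, h, mul_one, hA1, h2, smul_eq_mul, smul_eq_mul, mul_one, Complex.sub_re,
    Complex.re_ofReal_mul, Complex.ofReal_re, Complex.add_re]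
  simp only [Complex.star_def, Complex.conj_re]
  ring

section Product

variable {N : ℕ} (d : Fin N → ℕ) {k : ℕ} (c : Fin N → Fin k)

/-- A global index is the same as a family of block indices, because the blocks are the fibres of
the coloring. -/
def fullIdxEquiv : fullIdx d ≃ ((t : Fin k) → blockIdx d c t) where
  toFun x _ i := x i.1
  invFun z i := z (c i) ⟨i, rfl⟩
  left_inv _ := rfl
  right_inv z := by
    funext t ⟨i, hi⟩
    subst hi
    rfl

lemma trace_prodAcross (M : (t : Fin k) → Matrix (blockIdx d c t) (blockIdx d c t) ℂ) :
    (prodAcross d c M).trace = ∏ t, (M t).trace := by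
  simp only [Matrix.trace, Matrix.diag_apply]
  rw [Finset.prod_univ_sum, Fintype.piFinset_univ]
  exact Fintype.sum_equiv (fullIdxEquiv d c) _ _ fun x => rfl

lemma prodAcross_vecMulVec (ψ : (t : Fin k) → blockIdx d c t → ℂ) :
    prodAcross d c (fun t => vecMulVec (ψ t) (star (ψ t))) =
      vecMulVec (prodVec d c ψ) (star (prodVec d c ψ)) := by
  ext x y
  simp [prodAcross, prodVec, vecMulVec_apply, Finset.prod_mul_distrib]

/-- The tensor product of positive operators is a sum of rank-one operators on product vectors. -/
lemma prodAcross_eq_sum (M : (t : Fin k) → Matrix (blockIdx d c t) (blockIdx d c t) ℂ)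
    (hM : ∀ t, (M t).PosSemidef) :
    ∃ (m : Fin k → ℕ) (v : (t : Fin k) → Fin (m t) → blockIdx d c t → ℂ),
      prodAcross d c M = ∑ a : (t : Fin k) → Fin (m t),
        vecMulVec (prodVec d c fun t => v t (a t)) (star (prodVec d c fun t => v t (a t))) := by
  choose m v hv using fun t => Matrix.posSemidef_iff_eq_sum_vecMulVec.1 (hM t)
  refine ⟨m, v, ?_⟩
  simp_rw [← prodAcross_vecMulVec]
  ext x y
  simp only [prodAcross, Matrix.sum_apply]
  simp_rw [hv, Matrix.sum_apply]
  rw [Finset.prod_univ_sum, Fintype.piFinset_univ]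

lemma re_trace_prodAcross_mul_nonneg
    (M : (t : Fin k) → Matrix (blockIdx d c t) (blockIdx d c t) ℂ) (hM : ∀ t, (M t).PosSemidef)
    {ξ : Matrix (fullIdx d) (fullIdx d) ℂ} (hξ : BlockPos d c ξ) :
    0 ≤ ((prodAcross d c M * ξ).trace).re := by
  obtain ⟨m, v, h⟩ := prodAcross_eq_sum d c M hM
  rw [h, Finset.sum_mul, trace_sum, Complex.re_sum]
  refine Finset.sum_nonneg fun a _ => ?_
  rw [trace_vecMulVec_star_mul]
  exact hξ.2 _

/-- The projections `|φ⟩⟨φ|` onto tensor products `φ` of unit vectors of the blocks. -/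
def pureProducts : Set (Matrix (fullIdx d) (fullIdx d) ℂ) :=
  (fun ψ : (t : Fin k) → EuclideanSpace ℂ (blockIdx d c t) =>
    vecMulVec (prodVec d c fun t => (ψ t).ofLp) (star (prodVec d c fun t => (ψ t).ofLp))) ''
  Set.pi Set.univ fun _ => Metric.sphere 0 1

lemma isCompact_pureProducts : IsCompact (pureProducts d c) := by
  refine (isCompact_univ_pi fun t => isCompact_sphere _ _).image ?_
  refine continuous_pi fun x => continuous_pi fun y => ?_
  simp only [vecMulVec_apply, Pi.star_apply, prodVec]
  fun_prop

lemma isState_vecMulVec {n : Type*} [Fintype n] (v : EuclideanSpace ℂ n) (hv : ‖v‖ = 1) :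
    IsState (vecMulVec v.ofLp (star v.ofLp)) := by
  refine ⟨posSemidef_vecMulVec_self_star _, ?_⟩
  have h := EuclideanSpace.norm_sq_eq v
  rw [hv] at h
  simp only [Matrix.trace, Matrix.diag_apply, vecMulVec_apply, Pi.star_apply, Complex.star_def,
    Complex.mul_conj']
  exact_mod_cast h.symm.trans (one_pow 2)

lemma sepWrt_of_mem_convexHull {ρ : Matrix (fullIdx d) (fullIdx d) ℂ}
    (h : ρ ∈ convexHull ℝ (pureProducts d c)) : SepWrt d c ρ := by
  obtain ⟨ι, _, w, z, hw0, hw1, hz, rfl⟩ := mem_convexHull_iff_exists_fintype.1 h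
  choose ψ hψ hzψ using hz
  let e := Fintype.equivFin ι
  refine ⟨Fintype.card ι, fun j => w (e.symm j), fun j t =>
    vecMulVec (ψ (e.symm j) t).ofLp (star (ψ (e.symm j) t).ofLp), fun j => hw0 _, ?_,
    fun j t => isState_vecMulVec _ ?_, ?_⟩
  · rw [← hw1]
    exact e.symm.sum_comp w
  · simpa using hψ (e.symm j) t trivial
  · rw [← e.symm.sum_comp]
    refine Finset.sum_congr rfl fun j _ => ?_
    rw [prodAcross_vecMulVec, ← hzψ, Complex.coe_smul]

lemma prodVec_smul (a : Fin k → ℂ) (ψ : (t : Fin k) → blockIdx d c t → ℂ) :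
    prodVec d c (fun t => a t • ψ t) = (∏ t, a t) • prodVec d c ψ := by
  funext x
  simp [prodVec, Finset.prod_mul_distrib]

/-- Nonnegativity on products of unit vectors suffices for block positivity, by homogeneity. -/
lemma blockPos_of_pureProducts {ξ : Matrix (fullIdx d) (fullIdx d) ℂ} (hξ : ξ.IsHermitian)
    (h : ∀ A ∈ pureProducts d c, 0 ≤ ((A * ξ).trace).re) : BlockPos d c ξ := by
  refine ⟨hξ, fun ψ => ?_⟩
  rw [← trace_vecMulVec_star_mul]
  by_cases h0 : ∃ t, ψ t = 0
  · obtain ⟨t, ht⟩ := h0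
    have : prodVec d c ψ = 0 := by
      funext x
      exact Finset.prod_eq_zero (Finset.mem_univ t) (by simp [ht])
    simp [this]
  · push Not at h0
    set r : Fin k → ℝ := fun t => ‖WithLp.toLp 2 (ψ t)‖ with hr
    have hr0 : ∀ t, r t ≠ 0 := fun t => by simpa [hr] using h0 t
    set χ : (t : Fin k) → EuclideanSpace ℂ (blockIdx d c t) :=
      fun t => ((r t)⁻¹ : ℂ) • WithLp.toLp 2 (ψ t) with hχ
    have hχ1 : ∀ t, ‖χ t‖ = 1 := fun t => by
      rw [hχ, norm_smul, norm_inv, Complex.norm_real, Real.norm_of_nonneg (norm_nonneg _)]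
      exact inv_mul_cancel₀ (hr0 t)
    have hψ : ψ = fun t => (r t : ℂ) • (χ t).ofLp := by
      funext t
      have : (r t : ℂ) ≠ 0 := by exact_mod_cast hr0 t
      simp [hχ, smul_smul, mul_inv_cancel₀ this]
    have hA := h _ ⟨χ, fun t _ => by simpa using hχ1 t, rfl⟩
    rw [hψ, prodVec_smul, ← Complex.ofReal_prod, star_smul, Complex.star_def, Complex.conj_ofReal,
      smul_vecMulVec, vecMulVec_smul, smul_smul, ← Complex.ofReal_mul, smul_mul_assoc, trace_smul,
      smul_eq_mul, Complex.re_ofReal_mul]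
    exact mul_nonneg (mul_self_nonneg _) hA

lemma isState_of_mem_pureProducts {A : Matrix (fullIdx d) (fullIdx d) ℂ}
    (hA : A ∈ pureProducts d c) : IsState A := by
  obtain ⟨ψ, hψ, rfl⟩ := hA
  refine ⟨posSemidef_vecMulVec_self_star _, ?_⟩
  dsimp only
  rw [← prodAcross_vecMulVec, trace_prodAcross]
  exact Finset.prod_eq_one fun t _ =>
    (isState_vecMulVec (ψ t) (by simpa using hψ t trivial)).2

end Product

/-- A state `ρ` is separable with respect to the partition encoded by `c` if and only
if `Tr[ρ ξ] ≥ 0` for every operator `ξ` block-positive with respect to that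
partition. -/
theorem sepWrt_iff_blockPositive_test {N : ℕ} (d : Fin N → ℕ) {k : ℕ}
    (c : Fin N → Fin k) (ρ : Matrix (fullIdx d) (fullIdx d) ℂ) (hρ : IsState ρ) :
    SepWrt d c ρ ↔ ∀ ξ, BlockPos d c ξ → 0 ≤ ((ρ * ξ).trace).re := by
  constructor
  · rintro ⟨m, p, F, hp, -, hF, rfl⟩ ξ hξ
    rw [Finset.sum_mul, trace_sum, Complex.re_sum]
    refine Finset.sum_nonneg fun j _ => ?_
    rw [smul_mul_assoc, trace_smul, smul_eq_mul, Complex.re_ofReal_mul]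
    exact mul_nonneg (hp j) (re_trace_prodAcross_mul_nonneg d c _ (fun t => (hF j t).1) hξ)
  · intro h
    refine sepWrt_of_mem_convexHull d c ?_
    by_contra hmem
    have hcpt := isCompact_convexHull_of_isCompact (isCompact_pureProducts d c)
    have : LocallyConvexSpace ℝ (Matrix (fullIdx d) (fullIdx d) ℂ) :=
      inferInstanceAs (LocallyConvexSpace ℝ (fullIdx d → fullIdx d → ℂ))
    obtain ⟨f, u, hfρ, hfS⟩ := RCLike.geometric_hahn_banach_point_closed (𝕜 := ℂ)
      (convex_convexHull ℝ (pureProducts d c)) hcpt.isClosed hmem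
    obtain ⟨G, hG⟩ := exists_eq_trace_mul f.toLinearMap
    replace hG : ∀ A, f A = (A * G).trace := hG
    have hξ : ((1 / 2 : ℂ) • (G + Gᴴ) - (u : ℂ) • 1).IsHermitian := by
      simp [Matrix.IsHermitian, conjTranspose_smul, add_comm]
    have hneg := h _ (blockPos_of_pureProducts d c hξ fun A hA => by
      have hAs := isState_of_mem_pureProducts d c hA
      rw [re_trace_mul_witness hAs.1.isHermitian hAs.2, ← hG]
      exact sub_nonneg.2 (hfS A (subset_convexHull ℝ _ hA)).le)
    rw [re_trace_mul_witness hρ.1.isHermitian hρ.2, ← hG] at hneg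
    exact absurd hfρ (not_lt.2 (sub_nonneg.1 hneg))

end
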